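/- Let r ≥ 1, ν > 2, Z ∈ ℝ, and U ∈ ℝ^r be fixed. For τ ∈ ℝ^r define ρ(τ) = (tanh(√(τᵀτ))/√(τᵀτ)) τ (with ρ(0)=0), ω(τ) = √(1 − ρ(τ)ᵀρ(τ)), e(τ) = (Z − ρ(τ)ᵀU)/ω(τ), and the quasi log-likelihood ℓ*(τ) = −log ω(τ) − ((ν+1)/2) log( 1 + e(τ)²/(ν−2) ). Then for τ ≠ 0, ℓ* is differentiable at τ and its gradient equals ∇ℓ*(τ) = J(τ) [ (W e/ω) U + ((1 − W e²)/ω²) ρ ], where ρ = ρ(τ), ω = ω(τ), e = e(τ), W = (ν+1)/(ν−2+e²), and J(τ) = √(ρᵀρ/τᵀτ)(I_r − P_τ) + (1−ρᵀρ) P_τ with P_τ = τ(τᵀτ)⁻¹τᵀ. -/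

import Mathlib

open Matrix

/-- The inverse map `ρ(τ) = (tanh(√(τᵀτ))/√(τᵀτ)) · τ` of the variation-free
parametrization of factor loadings. -/
noncomputable def rhoOfTau {r : ℕ} (τ : Fin r → ℝ) : Fin r → ℝ :=
  if τ = 0 then 0 else
    (Real.tanh (Real.sqrt (τ ⬝ᵥ τ)) / Real.sqrt (τ ⬝ᵥ τ)) • τ

/-- The idiosyncratic scale `ω(τ) = √(1 − ρ(τ)ᵀρ(τ))`. -/
noncomputable def omegaOfTau {r : ℕ} (τ : Fin r → ℝ) : ℝ :=
  Real.sqrt (1 - rhoOfTau τ ⬝ᵥ rhoOfTau τ)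

/-- The standardized residual `e(τ) = (Z − ρ(τ)ᵀU)/ω(τ)`. -/
noncomputable def residOfTau {r : ℕ} (Z : ℝ) (U : Fin r → ℝ) (τ : Fin r → ℝ) : ℝ :=
  (Z - rhoOfTau τ ⬝ᵥ U) / omegaOfTau τ

/-- The quasi log-likelihood (up to an additive constant) of the standardized
Student-`t` with `ν` degrees of freedom, mean `ρ(τ)ᵀU` and scale `ω(τ)`. -/
noncomputable def quasiLogLik {r : ℕ} (ν Z : ℝ) (U : Fin r → ℝ)
    (τ : Fin r → ℝ) : ℝ :=
  -Real.log (omegaOfTau τ) -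
    ((ν + 1) / 2) * Real.log (1 + (residOfTau Z U τ) ^ 2 / (ν - 2))

lemma hasDerivAt_tanh_aux (x : ℝ) : HasDerivAt Real.tanh (1 - Real.tanh x ^ 2) x := by
  have h := (Real.hasDerivAt_sinh x).div (Real.hasDerivAt_cosh x) (Real.cosh_pos x).ne'
  have hf : Real.tanh = Real.sinh / Real.cosh := by
    funext y; simp [Real.tanh_eq_sinh_div_cosh]
  rw [hf]
  refine h.congr_deriv ?_
  have := (Real.cosh_pos x).ne'
  simp only [Pi.div_apply]
  field_simp

lemma hasFDerivAt_dot_aux {r : ℕ} (U τ : Fin r → ℝ) :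
    HasFDerivAt (fun x : Fin r → ℝ => x ⬝ᵥ U)
      (∑ i, U i • (ContinuousLinearMap.proj i : (Fin r → ℝ) →L[ℝ] ℝ)) τ := by
  have := (∑ i, U i • (ContinuousLinearMap.proj i : (Fin r → ℝ) →L[ℝ] ℝ)).hasFDerivAt (x := τ)
  convert this using 1
  funext x
  simp [dotProduct, mul_comm]

lemma hasFDerivAt_dot_self_aux {r : ℕ} (τ : Fin r → ℝ) :
    HasFDerivAt (fun x : Fin r → ℝ => x ⬝ᵥ x)
      ((2 : ℝ) • ∑ i, τ i • (ContinuousLinearMap.proj i : (Fin r → ℝ) →L[ℝ] ℝ)) τ := by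
  have : HasFDerivAt (fun x : Fin r → ℝ => ∑ i, x i * x i)
      (∑ i, (τ i • (ContinuousLinearMap.proj i : (Fin r → ℝ) →L[ℝ] ℝ) +
        τ i • (ContinuousLinearMap.proj i : (Fin r → ℝ) →L[ℝ] ℝ))) τ := by
    refine HasFDerivAt.fun_sum fun i _ => ?_
    exact (hasFDerivAt_apply i τ).mul (hasFDerivAt_apply i τ)
  have h2 : ((2 : ℝ) • ∑ i, τ i • (ContinuousLinearMap.proj i : (Fin r → ℝ) →L[ℝ] ℝ)) =
      ∑ i, (τ i • (ContinuousLinearMap.proj i : (Fin r → ℝ) →L[ℝ] ℝ) +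
        τ i • (ContinuousLinearMap.proj i : (Fin r → ℝ) →L[ℝ] ℝ)) := by
    rw [Finset.smul_sum]
    refine Finset.sum_congr rfl fun i _ => ?_
    rw [two_smul]
  rw [h2]; exact this

/-- Score of the quasi log-likelihood with respect to the
transformed loadings `τ`: for `τ ≠ 0`,
`∇ℓ*(τ) = J(τ) [ (W e/ω) U + ((1 − W e²)/ω²) ρ ]`, with `W = (ν+1)/(ν−2+e²)`. -/
theorem hasGradient_quasiLogLik (r : ℕ) (hr : 1 ≤ r) (ν : ℝ) (hν : 2 < ν)
    (Z : ℝ) (U : Fin r → ℝ)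
    (τ : Fin r → ℝ) (hτ : τ ≠ 0)
    (ρ : Fin r → ℝ) (hρ : ρ = rhoOfTau τ)
    (ω : ℝ) (hω : ω = omegaOfTau τ)
    (e : ℝ) (he : e = residOfTau Z U τ)
    (W : ℝ) (hW : W = (ν + 1) / (ν - 2 + e ^ 2))
    (Pτ : Matrix (Fin r) (Fin r) ℝ) (hP : Pτ = (τ ⬝ᵥ τ)⁻¹ • Matrix.vecMulVec τ τ)
    (J : Matrix (Fin r) (Fin r) ℝ)
    (hJ : J = Real.sqrt ((ρ ⬝ᵥ ρ) / (τ ⬝ᵥ τ)) • ((1 : Matrix (Fin r) (Fin r) ℝ) - Pτ)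
        + (1 - ρ ⬝ᵥ ρ) • Pτ) :
    HasFDerivAt (quasiLogLik ν Z U (r := r))
      (∑ i, (J *ᵥ ((W * e / ω) • U + ((1 - W * e ^ 2) / ω ^ 2) • ρ)) i •
        (ContinuousLinearMap.proj i : (Fin r → ℝ) →L[ℝ] ℝ)) τ := by
  have hA : 0 < τ ⬝ᵥ τ := by
    have h0 : 0 ≤ τ ⬝ᵥ τ := by
      simp only [dotProduct]; exact Finset.sum_nonneg fun i _ => mul_self_nonneg _
    exact lt_of_le_of_ne h0 (fun h => hτ (dotProduct_self_eq_zero.mp h.symm))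
  obtain ⟨s, hs⟩ : ∃ s, s = √(τ ⬝ᵥ τ) := ⟨_, rfl⟩
  have hspos : 0 < s := hs ▸ Real.sqrt_pos.mpr hA
  have hs2 : τ ⬝ᵥ τ = s ^ 2 := by rw [hs, Real.sq_sqrt hA.le]
  obtain ⟨t, ht⟩ : ∃ t, t = Real.tanh s := ⟨_, rfl⟩
  have htpos : 0 ≤ t := by
    rw [ht, Real.tanh_eq_sinh_div_cosh]
    exact div_nonneg (Real.sinh_nonneg_iff.mpr hspos.le) (Real.cosh_pos s).le
  have ht1 : 0 < 1 - t ^ 2 := by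
    have h1 := Real.cosh_sq s
    have h2 := Real.cosh_pos s
    rw [ht, Real.tanh_eq_sinh_div_cosh, div_pow, sub_pos, div_lt_one (by positivity)]
    linarith
  have hρ' : ρ = (t / s) • τ := by rw [hρ, rhoOfTau, if_neg hτ, ← hs, ← ht]
  have hρρ : ρ ⬝ᵥ ρ = t ^ 2 := by
    rw [hρ', dotProduct_smul, smul_dotProduct, hs2, smul_eq_mul, smul_eq_mul]
    field_simp
  have hω' : ω = √(1 - t ^ 2) := by rw [hω, omegaOfTau, ← hρ, hρρ]
  have hωpos : 0 < ω := hω' ▸ Real.sqrt_pos.mpr ht1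
  have hω2 : ω ^ 2 = 1 - t ^ 2 := by rw [hω', Real.sq_sqrt ht1.le]
  have he' : e = (Z - t / s * (τ ⬝ᵥ U)) / ω := by
    rw [he, residOfTau, ← hω, ← hρ, hρ', smul_dotProduct, smul_eq_mul]
  have hν2 : 0 < ν - 2 := by linarith
  have hden : 0 < ν - 2 + e ^ 2 := by positivity
  have harg : 0 < 1 + e ^ 2 / (ν - 2) := by positivity
  have hk : √((ρ ⬝ᵥ ρ) / (τ ⬝ᵥ τ)) = t / s := by
    rw [hρρ, hs2, ← div_pow, Real.sqrt_sq (by positivity)]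
  -- derivatives
  have dA := hasFDerivAt_dot_self_aux τ
  have dB := hasFDerivAt_dot_aux U τ
  set LA : (Fin r → ℝ) →L[ℝ] ℝ := ∑ i, τ i • (ContinuousLinearMap.proj i : (Fin r → ℝ) →L[ℝ] ℝ)
    with hLA
  set LB : (Fin r → ℝ) →L[ℝ] ℝ := ∑ i, U i • (ContinuousLinearMap.proj i : (Fin r → ℝ) →L[ℝ] ℝ)
    with hLB
  have dS : HasFDerivAt (fun x : Fin r → ℝ => √(x ⬝ᵥ x)) ((1 / s) • LA) τ := by
    refine HasFDerivAt.congr_fderiv (dA.sqrt hA.ne') ?_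
    rw [← hs, smul_smul]
    congr 1
    field_simp
  have dT : HasFDerivAt (fun x : Fin r → ℝ => Real.tanh √(x ⬝ᵥ x))
      ((1 - t ^ 2) • ((1 / s) • LA)) τ := by
    have h := hasDerivAt_tanh_aux √(τ ⬝ᵥ τ)
    rw [← hs, ← ht, hs] at h
    exact h.comp_hasFDerivAt τ dS
  have dQ : HasFDerivAt (fun x : Fin r → ℝ => rhoOfTau x ⬝ᵥ rhoOfTau x)
      ((2 * t * (1 - t ^ 2) / s) • LA) τ := by
    have h : HasFDerivAt (fun x : Fin r → ℝ => Real.tanh √(x ⬝ᵥ x) ^ 2)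
        ((2 * t * (1 - t ^ 2) / s) • LA) τ := by
      refine HasFDerivAt.congr_fderiv (dT.pow 2) ?_
      rw [← hs, ← ht]
      ext h
      simp
      ring
    refine h.congr_of_eventuallyEq ?_
    filter_upwards [isOpen_ne.mem_nhds hτ] with x hx
    have hx0 : 0 ≤ x ⬝ᵥ x := by
      simp only [dotProduct]; exact Finset.sum_nonneg fun i _ => mul_self_nonneg _
    have hx1 : x ⬝ᵥ x ≠ 0 := fun h => hx (dotProduct_self_eq_zero.mp h)
    have hx2 : √(x ⬝ᵥ x) ≠ 0 := fun h => hx1 ((Real.sqrt_eq_zero hx0).mp h)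
    have hx3 : x ⬝ᵥ x = √(x ⬝ᵥ x) ^ 2 := (Real.sq_sqrt hx0).symm
    have hx4 : ∀ c : ℝ, (c • x) ⬝ᵥ (c • x) = c ^ 2 * √(x ⬝ᵥ x) ^ 2 := by
      intro c
      rw [dotProduct_smul, smul_dotProduct, smul_eq_mul, smul_eq_mul, ← hx3]
      ring
    rw [rhoOfTau, if_neg hx, hx4]
    field_simp
  have dM : HasFDerivAt (fun x : Fin r → ℝ => rhoOfTau x ⬝ᵥ U)
      ((t / s) • LB + ((τ ⬝ᵥ U) * ((1 - t ^ 2) / s - t / s ^ 2) / s) • LA) τ := by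
    have h : HasFDerivAt (fun x : Fin r → ℝ => Real.tanh √(x ⬝ᵥ x) * (√(x ⬝ᵥ x))⁻¹ * (x ⬝ᵥ U))
        ((t / s) • LB + ((τ ⬝ᵥ U) * ((1 - t ^ 2) / s - t / s ^ 2) / s) • LA) τ := by
      have hne : √(τ ⬝ᵥ τ) ≠ 0 := hs ▸ hspos.ne'
      have dI := (hasDerivAt_inv hne).comp_hasFDerivAt τ dS
      refine HasFDerivAt.congr_fderiv ((dT.mul dI).mul dB) ?_
      ext h
      simp [← hs, ← ht]
      field_simp
      ring
    refine h.congr_of_eventuallyEq ?_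
    filter_upwards [isOpen_ne.mem_nhds hτ] with x hx
    rw [rhoOfTau, if_neg hx, smul_dotProduct, smul_eq_mul, div_eq_mul_inv]
  obtain ⟨LQ, hLQ⟩ : ∃ L : (Fin r → ℝ) →L[ℝ] ℝ, L = ((2 * t * (1 - t ^ 2) / s) • LA) := ⟨_, rfl⟩
  obtain ⟨LM, hLM⟩ : ∃ L : (Fin r → ℝ) →L[ℝ] ℝ, L = ((t / s) • LB +
    ((τ ⬝ᵥ U) * ((1 - t ^ 2) / s - t / s ^ 2) / s) • LA) := ⟨_, rfl⟩
  rw [← hLQ] at dQ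
  rw [← hLM] at dM
  have hq1 : (1 - rhoOfTau τ ⬝ᵥ rhoOfTau τ) ≠ 0 := by rw [← hρ, hρρ]; exact ht1.ne'
  have dW : HasFDerivAt (omegaOfTau (r := r)) ((-1 / (2 * ω)) • LQ) τ := by
    refine HasFDerivAt.congr_fderiv ((dQ.const_sub 1).sqrt hq1) ?_
    rw [← hρ, hρρ, ← hω']
    ext h
    simp
    ring
  have dE : HasFDerivAt (residOfTau (r := r) Z U)
      ((-1 / ω) • LM + (e / (2 * ω ^ 2)) • LQ) τ := by
    have hne : omegaOfTau τ ≠ 0 := hω ▸ hωpos.ne'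
    have dI := (hasDerivAt_inv hne).comp_hasFDerivAt τ dW
    have h := (dM.const_sub Z).mul dI
    have hf : residOfTau (r := r) Z U =
        fun x => (Z - rhoOfTau x ⬝ᵥ U) * (Inv.inv ∘ omegaOfTau) x := by
      funext x; simp [residOfTau, div_eq_mul_inv]
    rw [hf]
    refine HasFDerivAt.congr_fderiv (h) ?_
    have he2 : Z - rhoOfTau τ ⬝ᵥ U = e * ω := by
      rw [he, residOfTau, ← hω]; field_simp
    ext h
    simp [← hω, he2]
    field_simp
    ring
  have dL : HasFDerivAt (quasiLogLik (r := r) ν Z U)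
      ((W * e / ω) • LM + ((1 - W * e ^ 2) / (2 * ω ^ 2)) • LQ) τ := by
    have h1 := (dW.log (hω ▸ hωpos.ne')).neg
    have h2 : HasFDerivAt (fun x => 1 + (residOfTau Z U x) ^ 2 / (ν - 2))
      ((2 * e / (ν - 2)) • ((-1 / ω) • LM + (e / (2 * ω ^ 2)) • LQ)) τ := by
      have := ((dE.pow 2).mul_const (ν - 2)⁻¹).const_add 1
      refine HasFDerivAt.congr_fderiv (this) ?_
      ext h
      simp [← he]
      ring
    have h3 := (h2.log (by rw [← he]; exact harg.ne')).const_mul ((ν + 1) / 2)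
    have h4 := h1.sub h3
    refine HasFDerivAt.congr_fderiv (h4) ?_
    ext h
    simp [← hω, ← he, hW]
    have hc : 1 + e ^ 2 / (ν - 2) = (ν - 2 + e ^ 2) / (ν - 2) := by field_simp
    rw [hc]
    generalize LM h = a
    generalize LQ h = b
    generalize ν - 2 + e ^ 2 = d at hden ⊢
    field_simp
    ring
  refine HasFDerivAt.congr_fderiv (dL) ?_
  ext h
  have hLAh : LA h = τ ⬝ᵥ h := by simp [hLA, dotProduct]
  have hLBh : LB h = U ⬝ᵥ h := by simp [hLB, dotProduct]
  have hJv : ∀ v : Fin r → ℝ, (J *ᵥ v) ⬝ᵥ h =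
      t / s * (v ⬝ᵥ h) + (1 - t ^ 2 - t / s) / s ^ 2 * (τ ⬝ᵥ v) * (τ ⬝ᵥ h) := by
    intro v
    rw [hJ, hP, hk, hρρ, hs2]
    simp only [add_mulVec, smul_mulVec, sub_mulVec, one_mulVec, vecMulVec_mulVec,
      add_dotProduct, smul_dotProduct, sub_dotProduct, smul_eq_mul, op_smul_eq_smul]
    field_simp
    ring
  have hL : (∑ i, (J *ᵥ ((W * e / ω) • U + ((1 - W * e ^ 2) / ω ^ 2) • ρ)) i •
        (ContinuousLinearMap.proj i : (Fin r → ℝ) →L[ℝ] ℝ)) h =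
      (J *ᵥ ((W * e / ω) • U + ((1 - W * e ^ 2) / ω ^ 2) • ρ)) ⬝ᵥ h := by
    simp [dotProduct]
  rw [hL, hJv, hLM, hLQ, hρ']
  simp only [add_dotProduct, smul_dotProduct, dotProduct_add, dotProduct_smul, smul_eq_mul,
    ContinuousLinearMap.add_apply, ContinuousLinearMap.smul_apply, hLAh, hLBh, hs2,
    dotProduct_comm U τ]
  rw [hω2]
  field_simp
  ring
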